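/- Let X be a complete CAT(0) space, L ∈ ℕ, and let (x_n) be a sequence in X that converges to a point ξ_L of the Gromov boundary of the hyperbolic model X_L = (X,d_L). Then (x_n) converges to a point ξ of the visual boundary ∂X of X; more precisely, the geodesic segments [o,x_n] from a fixed basepoint converge (uniformly on bounded sets) to a geodesic ray from o. -/

import Mathlib

/-!
STATEMENT 11: Let X be a complete CAT(0) space, L ∈ ℕ, and let (x_n) be a
sequence in X converging to a point of the Gromov boundary of the hyperbolic
model X_L = (X, d_L) (i.e. the d_L-Gromov products (x_n|x_m)_o tend to ∞).
Then (x_n) converges to a point of the visual boundary ∂X: the geodesic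
segments [o, x_n] converge (pointwise on [0,∞), equivalently uniformly on
bounded sets) to a geodesic ray from o.
-/

open Filter Set

namespace Stmt11

variable {X : Type*} [MetricSpace X]

/-- A complete metric space satisfying this midpoint + CN-inequality condition
is exactly a Hadamard (complete CAT(0)) space, by the Bruhat–Tits
characterization. -/
def IsCAT0 (X : Type*) [MetricSpace X] : Prop :=
  ∀ y z : X, ∃ m : X, dist y m = dist y z / 2 ∧ dist z m = dist y z / 2 ∧
    ∀ x : X, dist x m ^ 2 ≤ (dist x y ^ 2 + dist x z ^ 2) / 2 - dist y z ^ 2 / 4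

/-- A curtain in a CAT(0) space: the data of a geodesic `γ` defined on a
closed interval `I` containing `[t - 1/2, t + 1/2]`, determining the curtain
dual to `γ` at `t`. -/
structure Curtain (X : Type*) [MetricSpace X] where
  γ : ℝ → X
  I : Set ℝ
  t : ℝ
  ordConnected : I.OrdConnected
  isClosed : IsClosed I
  icc_subset : Icc (t - 2⁻¹) (t + 2⁻¹) ⊆ I
  geodesic : ∀ s ∈ I, ∀ s' ∈ I, dist (γ s) (γ s') = |s - s'|

/-- `s` is a parameter of a nearest-point projection of `x` to the geodesic of
the curtain (in a complete CAT(0) space such an `s` exists and is unique). -/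
def Curtain.IsProjParam (c : Curtain X) (s : ℝ) (x : X) : Prop :=
  s ∈ c.I ∧ ∀ s' ∈ c.I, dist x (c.γ s) ≤ dist x (c.γ s')

/-- The curtain itself: `h = π_γ⁻¹(γ([t - 1/2, t + 1/2]))`. -/
def Curtain.carrier (c : Curtain X) : Set X :=
  {x | ∃ s, c.IsProjParam s x ∧ s ∈ Icc (c.t - 2⁻¹) (c.t + 2⁻¹)}

/-- The open halfspace `h⁻ = π_γ⁻¹(γ(I ∩ (-∞, t - 1/2)))`. -/
def Curtain.minus (c : Curtain X) : Set X :=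
  {x | ∃ s, c.IsProjParam s x ∧ s < c.t - 2⁻¹}

/-- The open halfspace `h⁺ = π_γ⁻¹(γ(I ∩ (t + 1/2, ∞)))`. -/
def Curtain.plus (c : Curtain X) : Set X :=
  {x | ∃ s, c.IsProjParam s x ∧ c.t + 2⁻¹ < s}

/-- The curtain `c` separates `A` from `B`. -/
def Curtain.Separates (c : Curtain X) (A B : Set X) : Prop :=
  (A ⊆ c.minus ∧ B ⊆ c.plus) ∨ (A ⊆ c.plus ∧ B ⊆ c.minus)

/-- `c 0, …, c (n-1)` is a chain of curtains: each curtain separates its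
predecessor from its successor. -/
def IsChainOn (c : ℕ → Curtain X) (n : ℕ) : Prop :=
  ∀ i : ℕ, i + 2 < n → (c (i + 1)).Separates (c i).carrier (c (i + 2)).carrier

/-- The chain `c 0, …, c (n-1)` meets the curtain `h`: every curtain of the
chain intersects `h`. -/
def ChainMeets (c : ℕ → Curtain X) (n : ℕ) (h : Curtain X) : Prop :=
  ∀ i < n, ((c i).carrier ∩ h.carrier).Nonempty

/-- Two disjoint curtains are `L`-separated if every chain meeting both has
cardinality at most `L`. -/
def LSeparated (L : ℕ) (h h' : Curtain X) : Prop :=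
  h.carrier ∩ h'.carrier = ∅ ∧
    ∀ (c : ℕ → Curtain X) (n : ℕ), IsChainOn c n → ChainMeets c n h →
      ChainMeets c n h' → n ≤ L

/-- `c 0, …, c (n-1)` is an `L`-chain: a chain of pairwise `L`-separated
curtains. -/
def IsLChainOn (L : ℕ) (c : ℕ → Curtain X) (n : ℕ) : Prop :=
  IsChainOn c n ∧ ∀ i < n, ∀ j < n, i ≠ j → LSeparated L (c i) (c j)

/-- An infinite `L`-chain. -/
def IsInfLChain (L : ℕ) (c : ℕ → Curtain X) : Prop :=
  (∀ i : ℕ, (c (i + 1)).Separates (c i).carrier (c (i + 2)).carrier) ∧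
    ∀ i j : ℕ, i ≠ j → LSeparated L (c i) (c j)

open scoped Classical in
/-- The hyperbolic-model distance
`d_L(x, y) = 1 + max {|c| : c an L-chain separating x from y}` (and `0` if
`x = y`).  The metric space `X_L = (X, d_L)` is the hyperbolic model of
Petyt–Spriano–Zalloum. -/
noncomputable def dL (L : ℕ) (x y : X) : ℝ :=
  if x = y then 0
  else 1 + (sSup {n : ℕ | ∃ c : ℕ → Curtain X,
      IsLChainOn L c n ∧ ∀ i < n, (c i).Separates {x} {y}} : ℕ)

/-- The Gromov product with respect to an abstract distance function `d`. -/
noncomputable def gpD (d : X → X → ℝ) (o x y : X) : ℝ := (d x o + d y o - d x y) / 2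

/-- A sequence converges at infinity with respect to `d`. -/
def ConvAtInfinityD (d : X → X → ℝ) (o : X) (u : ℕ → X) : Prop :=
  Tendsto (fun p : ℕ × ℕ => gpD d o (u p.1) (u p.2)) atTop atTop

/-- Sequences converging at infinity for `d`. -/
def BSeqD (d : X → X → ℝ) (o : X) := {u : ℕ → X // ConvAtInfinityD d o u}

/-- Equivalence of sequences converging at infinity. -/
def bRelD (d : X → X → ℝ) (o : X) (u v : BSeqD d o) : Prop :=
  Tendsto (fun i => gpD d o (u.1 i) (v.1 i)) atTop atTop

/-- The Gromov boundary of `(X, d)` with basepoint `o`. -/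
def GromovBoundaryD (d : X → X → ℝ) (o : X) := Quot (bRelD d o)

/-- The boundary point of a sequence converging at infinity. -/
def GromovBoundaryD.mk (d : X → X → ℝ) (o : X) (u : ℕ → X)
    (hu : ConvAtInfinityD d o u) : GromovBoundaryD d o :=
  Quot.mk _ ⟨u, hu⟩

/-- The extended Gromov product of two boundary points:
`(ξ|η)_o = sup { liminf (uᵢ|vᵢ)_o : u ∈ ξ, v ∈ η }`. -/
noncomputable def gpBB (d : X → X → ℝ) (o : X) (ξ η : GromovBoundaryD d o) : EReal :=
  ⨆ (u : {u : BSeqD d o // Quot.mk _ u = ξ}) (v : {v : BSeqD d o // Quot.mk _ v = η}),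
    liminf (fun i => ((gpD d o (u.1.1 i) (v.1.1 i) : ℝ) : EReal)) atTop

/-- The topology of the Gromov boundary, generated by the sets
`U_{ξ,R} = {η | (ξ|η)_o > R}`. -/
instance (d : X → X → ℝ) (o : X) : TopologicalSpace (GromovBoundaryD d o) :=
  TopologicalSpace.generateFrom
    {U | ∃ (ξ : GromovBoundaryD d o) (R : EReal), U = {η | R < gpBB d o ξ η}}

/-- A geodesic ray from `o`, parametrized by arclength on `[0, ∞)`. -/
def IsRayFrom (o : X) (γ : ℝ → X) : Prop :=
  γ 0 = o ∧ ∀ s t : ℝ, 0 ≤ s → 0 ≤ t → dist (γ s) (γ t) = |s - t|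

/-- The geodesic ray `γ` crosses the curtain `h`: `h` eventually separates
`γ 0` from the tail of `γ`. -/
def RayCrosses (γ : ℝ → X) (h : Curtain X) : Prop :=
  ∃ t₀ : ℝ, 0 ≤ t₀ ∧ h.Separates {γ 0} (γ '' Ici t₀)

/-- The ray `γ` crosses an infinite `L`-chain. -/
def CrossesInfLChain (L : ℕ) (γ : ℝ → X) : Prop :=
  ∃ c : ℕ → Curtain X, IsInfLChain L c ∧ ∀ i, RayCrosses γ (c i)

/-- `c` is the arclength parametrization of the geodesic segment `[o, x]`,
extended by `x` beyond `d(o,x)` (in a complete CAT(0) space this segment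
exists and is unique). -/
def IsSegParamTo (o x : X) (c : ℝ → X) : Prop :=
  c 0 = o ∧
  (∀ s t : ℝ, 0 ≤ s → s ≤ dist o x → 0 ≤ t → t ≤ dist o x →
    dist (c s) (c t) = |s - t|) ∧
  (∀ t : ℝ, dist o x ≤ t → c t = x)

/-- The sequence `x` converges to (the class of) the geodesic ray `γ` in the
visual boundary: the geodesic segments `[o, xₙ]` converge to `γ`
(pointwise, equivalently uniformly on bounded sets). -/
def SeqConvergesToRay (o : X) (x : ℕ → X) (γ : ℝ → X) : Prop :=
  ∀ c : ℕ → ℝ → X, (∀ n, IsSegParamTo o (x n) (c n)) →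
    ∀ t : ℝ, 0 ≤ t → Tendsto (fun n => c n t) atTop (nhds (γ t))

/-!
A large Gromov product of `x` and `y` for `d_L` yields a long `L`-chain separating the basepoint `o`
from both: otherwise the parts of maximal `L`-chains for `x` and for `y` that lie beyond a long
common initial stretch could be glued to an `L`-chain separating `x` from `y`, making `d_L x y` too
large. A long `L`-chain crossed by the segments `[o, x]` and `[o, y]` creates a bottleneck. At its
far end some point of `[o, y]` is within `2L + 2` of `[o, x]`; otherwise the segment joining the two
would carry `L + 1` dual curtains, each meeting two consecutive curtains of the `L`-chain. By
convexity of the metric, the two segments are then close to each other on any bounded set, so the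
segments `[o, xₙ]` are uniformly Cauchy on bounded sets.
-/

section DivisionPoint

/-- `m` divides the pair `(y, z)` in the ratio `l : 1 - l`: the distances from `m` obey Stewart's
formula as an inequality. Midpoints in the sense of `IsCAT0` are the case `l = 1 / 2`, and in a
CAT(0) space these are exactly the points of the segment `[y, z]`. -/
def IsDivisionPoint (y z : X) (l : ℝ) (m : X) : Prop :=
  ∀ x, dist x m ^ 2 ≤ (1 - l) * dist x y ^ 2 + l * dist x z ^ 2 - l * (1 - l) * dist y z ^ 2

namespace IsDivisionPoint

variable {y z m m' : X} {l l' : ℝ}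

lemma symm (h : IsDivisionPoint y z l m) : IsDivisionPoint z y (1 - l) m := fun x => by
  have := h x
  rw [dist_comm z y]
  linarith

lemma dist_left_le (h : IsDivisionPoint y z l m) (hl : 0 ≤ l) : dist y m ≤ l * dist y z := by
  have := h y
  rw [dist_self] at this
  exact le_of_sq_le_sq (by linarith) (by positivity)

lemma dist_right_le (h : IsDivisionPoint y z l m) (hl : l ≤ 1) :
    dist m z ≤ (1 - l) * dist y z := by
  rw [dist_comm m, dist_comm y]
  exact h.symm.dist_left_le (sub_nonneg.2 hl)

lemma dist_le (h : IsDivisionPoint y z l m) (hl : l ∈ Icc (0 : ℝ) 1)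
    (hy : dist y m' ≤ l' * dist y z) (hz : dist m' z ≤ (1 - l') * dist y z) :
    dist m' m ≤ |l' - l| * dist y z := by
  have hy2 : dist y m' ^ 2 ≤ (l' * dist y z) ^ 2 := by gcongr
  have hz2 : dist m' z ^ 2 ≤ ((1 - l') * dist y z) ^ 2 := by gcongr
  refine le_of_sq_le_sq ?_ (by positivity)
  calc dist m' m ^ 2
      ≤ (1 - l) * dist y m' ^ 2 + l * dist m' z ^ 2 - l * (1 - l) * dist y z ^ 2 := by
        rw [dist_comm y m']; exact h m'
    _ ≤ (1 - l) * (l' * dist y z) ^ 2 + l * ((1 - l') * dist y z) ^ 2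
          - l * (1 - l) * dist y z ^ 2 := by
        gcongr
        exacts [sub_nonneg.2 hl.2, hl.1]
    _ = (|l' - l| * dist y z) ^ 2 := by rw [mul_pow |l' - l|, sq_abs]; ring

lemma dist_eq (h : IsDivisionPoint y z l m) (h' : IsDivisionPoint y z l' m')
    (hl : l ∈ Icc (0 : ℝ) 1) (hl' : l' ∈ Icc (0 : ℝ) 1) :
    dist m m' = |l - l'| * dist y z := by
  refine (h'.dist_le hl' (h.dist_left_le hl.1) (h.dist_right_le hl.2)).antisymm ?_
  have hright := dist_triangle4 y m m' z
  have hright' := dist_triangle4 y m' m z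
  have := h.dist_left_le hl.1
  have := h'.dist_left_le hl'.1
  have := h.dist_right_le hl.2
  have := h'.dist_right_le hl'.2
  rw [← abs_of_nonneg (dist_nonneg (x := y) (y := z)), ← abs_mul, abs_le']
  rw [dist_comm m' m] at hright'
  constructor <;> linarith

lemma exists_midpoint (hcat : IsCAT0 X) (h : IsDivisionPoint y z l m)
    (h' : IsDivisionPoint y z l' m') (hl : l ∈ Icc (0 : ℝ) 1) (hl' : l' ∈ Icc (0 : ℝ) 1) :
    ∃ w, IsDivisionPoint y z ((l + l') / 2) w := by
  obtain ⟨w, -, -, hw⟩ := hcat m m'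
  refine ⟨w, fun x => ?_⟩
  have hww := hw x
  rw [h.dist_eq h' hl hl', mul_pow, sq_abs] at hww
  linarith [h x, h' x]

lemma isClosed_setOf_exists [CompleteSpace X] (y z : X) :
    IsClosed {l : ℝ | l ∈ Icc (0 : ℝ) 1 ∧ ∃ m, IsDivisionPoint y z l m} := by
  refine IsSeqClosed.isClosed fun u l hu hul => ?_
  choose hu m hm using hu
  have hcauchy : CauchySeq m := by
    have hbound : Tendsto (fun p : ℕ × ℕ => |u p.1 - u p.2| * dist y z) atTop (nhds 0) := by
      simpa only [zero_mul, Real.dist_eq] using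
        (cauchySeq_iff_tendsto_dist_atTop_0.1 hul.cauchySeq).mul_const (dist y z)
    refine cauchySeq_iff_tendsto_dist_atTop_0.2 (hbound.congr fun p => ?_)
    exact ((hm p.1).dist_eq (hm p.2) (hu p.1) (hu p.2)).symm
  obtain ⟨w, hw⟩ := cauchySeq_tendsto_of_complete hcauchy
  refine ⟨isClosed_Icc.mem_of_tendsto hul (.of_forall hu), w, fun x => ?_⟩
  refine le_of_tendsto_of_tendsto' ((tendsto_const_nhds.dist hw).pow 2) ?_ fun n => hm n x
  exact (Continuous.tendsto (f := fun l => (1 - l) * dist x y ^ 2 + l * dist x z ^ 2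
    - l * (1 - l) * dist y z ^ 2) (by fun_prop) l).comp hul

end IsDivisionPoint

lemma ordConnected_of_isClosed_of_midpoint {S : Set ℝ} (hS : IsClosed S)
    (hmid : ∀ a ∈ S, ∀ b ∈ S, (a + b) / 2 ∈ S) : S.OrdConnected := by
  refine ⟨fun a ha b hb l hl => ?_⟩
  have hlow : sSup (S ∩ Iic l) ∈ S ∩ Iic l :=
    (hS.inter isClosed_Iic).csSup_mem ⟨a, ha, hl.1⟩ ⟨l, fun _ h => h.2⟩
  have hupp : sInf (S ∩ Ici l) ∈ S ∩ Ici l :=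
    (hS.inter isClosed_Ici).csInf_mem ⟨b, hb, hl.2⟩ ⟨l, fun _ h => h.2⟩
  set p := sSup (S ∩ Iic l)
  set q := sInf (S ∩ Ici l)
  have hpl : p ≤ l := hlow.2
  have hlq : l ≤ q := hupp.2
  rcases le_total ((p + q) / 2) l with h | h
  · have : (p + q) / 2 ≤ p := le_csSup ⟨l, fun _ h => h.2⟩ ⟨hmid p hlow.1 q hupp.1, h⟩
    have hpeq : p = l := by linarith
    exact hpeq ▸ hlow.1
  · have : q ≤ (p + q) / 2 := csInf_le ⟨l, fun _ h => h.2⟩ ⟨hmid p hlow.1 q hupp.1, h⟩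
    have hqeq : q = l := by linarith
    exact hqeq ▸ hupp.1

namespace IsCAT0

variable [CompleteSpace X] (hcat : IsCAT0 X)
include hcat

lemma exists_isDivisionPoint (y z : X) {l : ℝ} (hl : l ∈ Icc (0 : ℝ) 1) :
    ∃ m, IsDivisionPoint y z l m := by
  have hS := IsDivisionPoint.isClosed_setOf_exists y z
  set S := {l : ℝ | l ∈ Icc (0 : ℝ) 1 ∧ ∃ m, IsDivisionPoint y z l m}
  have hS0 : (0 : ℝ) ∈ S := ⟨by simp, y, fun x => by simp⟩
  have hS1 : (1 : ℝ) ∈ S := ⟨by simp, z, fun x => by simp⟩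
  have hmid : ∀ a ∈ S, ∀ b ∈ S, (a + b) / 2 ∈ S := by
    rintro a ⟨ha, m, hm⟩ b ⟨hb, m', hm'⟩
    exact ⟨⟨by linarith [ha.1, hb.1], by linarith [ha.2, hb.2]⟩,
      hm.exists_midpoint hcat hm' ha hb⟩
  exact ((ordConnected_of_isClosed_of_midpoint hS hmid).out hS0 hS1 hl).2

lemma isDivisionPoint {y z m : X} {l : ℝ} (hl : l ∈ Icc (0 : ℝ) 1)
    (hy : dist y m ≤ l * dist y z) (hz : dist m z ≤ (1 - l) * dist y z) :
    IsDivisionPoint y z l m := by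
  obtain ⟨w, hw⟩ := hcat.exists_isDivisionPoint y z hl
  have hdist : dist m w ≤ 0 := by simpa using hw.dist_le hl hy hz
  rwa [dist_le_zero.1 hdist]

/-- Comparison with a Euclidean triangle cut by a line parallel to a side. -/
lemma dist_le_of_proportional {o p q a b : X} {l : ℝ} (hl : l ∈ Icc (0 : ℝ) 1)
    (ha : dist o a ≤ l * dist o p) (hap : dist a p ≤ (1 - l) * dist o p)
    (hb : dist o b ≤ l * dist o q) (hbq : dist b q ≤ (1 - l) * dist o q) :
    dist a b ≤ l * dist p q := by
  have hab := hcat.isDivisionPoint hl hb hbq a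
  have hqa := hcat.isDivisionPoint hl ha hap q
  have hoa : dist o a ^ 2 ≤ (l * dist o p) ^ 2 := by gcongr
  rw [dist_comm a o, dist_comm a q] at hab
  rw [dist_comm q o, dist_comm q p] at hqa
  refine le_of_sq_le_sq ?_ (mul_nonneg hl.1 dist_nonneg)
  linarith [mul_le_mul_of_nonneg_left hqa hl.1,
    mul_le_mul_of_nonneg_left hoa (sub_nonneg.2 hl.2)]

end IsCAT0

lemma IsCAT0.quadrilateral (hcat : IsCAT0 X) (a b c d : X) :
    dist a c ^ 2 + dist b d ^ 2 ≤
      dist a b ^ 2 + dist b c ^ 2 + dist c d ^ 2 + dist d a ^ 2 := by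
  obtain ⟨m, -, -, hm⟩ := hcat a c
  have hb := hm b
  have hd := hm d
  have hbd : dist b d ^ 2 ≤ (dist b m + dist d m) ^ 2 := by
    gcongr
    exact dist_triangle_right b d m
  rw [dist_comm b a] at hb
  rw [dist_comm d c] at hd
  linarith [sq_nonneg (dist b m - dist d m), hbd]

end DivisionPoint

section Geodesics

/-- `g` restricts to a geodesic on `I`, parametrized by arclength. -/
def IsGeodOn (g : ℝ → X) (I : Set ℝ) : Prop :=
  ∀ s ∈ I, ∀ t ∈ I, dist (g s) (g t) = |s - t|

/-- `g s` is a nearest-point projection of `x` to `g '' I`. -/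
def IsNearest (g : ℝ → X) (I : Set ℝ) (s : ℝ) (x : X) : Prop :=
  s ∈ I ∧ ∀ t ∈ I, dist x (g s) ≤ dist x (g t)

lemma IsNearest.self {g : ℝ → X} {I : Set ℝ} {s : ℝ} (hs : s ∈ I) : IsNearest g I s (g s) :=
  ⟨hs, fun _ _ => (dist_self (g s)).trans_le dist_nonneg⟩

lemma IsNearest.of_between {g : ℝ → X} {I : Set ℝ} {s : ℝ} {x y : X} (hs : IsNearest g I s x)
    (hy : dist x y + dist y (g s) ≤ dist x (g s)) : IsNearest g I s y :=
  ⟨hs.1, fun t ht => by linarith [hs.2 t ht, dist_triangle x y (g t)]⟩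

namespace IsGeodOn

variable {g : ℝ → X} {I J : Set ℝ}

lemma mono (hg : IsGeodOn g I) (hJ : J ⊆ I) : IsGeodOn g J :=
  fun s hs t ht => hg s (hJ hs) t (hJ ht)

lemma continuousOn (hg : IsGeodOn g I) : ContinuousOn g I :=
  LipschitzOnWith.continuousOn (K := 1) <| .of_dist_le_mul fun s hs t ht => by
    rw [hg s hs t ht, NNReal.coe_one, one_mul, Real.dist_eq]

lemma isPreconnected_image (hg : IsGeodOn g I) (hI : I.OrdConnected) : IsPreconnected (g '' I) :=
  hI.isPreconnected.image g hg.continuousOn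

lemma exists_isNearest (hg : IsGeodOn g I) (hI : IsClosed I) (hne : I.Nonempty) (x : X) :
    ∃ s, IsNearest g I s x := by
  obtain ⟨u, hu⟩ := hne
  have hfar : ∀ᶠ s in cocompact ℝ ⊓ 𝓟 I, dist x (g u) ≤ dist x (g s) := by
    rw [eventually_inf_principal]
    filter_upwards [(tendsto_dist_right_cocompact_atTop u).eventually_ge_atTop
      (2 * dist x (g u))] with s hs hsI
    rw [Real.dist_eq, ← hg s hsI u hu] at hs
    linarith [dist_triangle_left (g s) (g u) x]
  exact (Continuous.comp_continuousOn (continuous_const.dist continuous_id)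
    hg.continuousOn).exists_isMinOn' hI hu hfar

end IsGeodOn

variable [CompleteSpace X] (hcat : IsCAT0 X)
include hcat

lemma IsCAT0.exists_geodesic (y z : X) :
    ∃ g : ℝ → X, g 0 = y ∧ g (dist y z) = z ∧ IsGeodOn g (Icc 0 (dist y z)) := by
  rcases (dist_nonneg (x := y) (y := z)).eq_or_lt' with hD | hD
  · refine ⟨fun _ => y, rfl, dist_eq_zero.1 hD, fun s hs t ht => ?_⟩
    rw [hD, Icc_self, mem_singleton_iff] at hs ht
    simp [hs, ht]
  have hmem : ∀ s ∈ Icc 0 (dist y z), s / dist y z ∈ Icc (0 : ℝ) 1 := fun s hs =>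
    ⟨div_nonneg hs.1 hD.le, (div_le_one hD).2 hs.2⟩
  have hpoint : ∀ s, ∃ m, s ∈ Icc 0 (dist y z) → IsDivisionPoint y z (s / dist y z) m := fun s => by
    by_cases hs : s ∈ Icc 0 (dist y z)
    · exact (hcat.exists_isDivisionPoint y z (hmem s hs)).imp fun m hm _ => hm
    · exact ⟨y, fun h => absurd h hs⟩
  choose g hg using hpoint
  refine ⟨g, ?_, ?_, fun s hs t ht => ?_⟩
  · simpa [eq_comm] using (hg 0 ⟨le_rfl, hD.le⟩).dist_left_le (by simp)
  · simpa [hD.ne'] using (hg _ ⟨hD.le, le_rfl⟩).dist_right_le (by simp [hD.ne'])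
  · rw [(hg s hs).dist_eq (hg t ht) (hmem s hs) (hmem t ht), ← sub_div, abs_div,
      abs_of_pos hD, div_mul_cancel₀ _ hD.ne']

variable {g : ℝ → X} {I : Set ℝ} {s t : ℝ} {x y : X}

lemma IsGeodOn.strongConvexOn_sq_dist (hg : IsGeodOn g I) (hI : I.OrdConnected) (x : X) :
    StrongConvexOn I 2 fun s => dist x (g s) ^ 2 := by
  refine ⟨hI.convex, fun s hs t ht a b ha hb hab => ?_⟩
  obtain rfl : a = 1 - b := by linarith
  have hm : (1 - b) • s + b • t ∈ I := hI.convex hs ht ha hb hab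
  simp only [smul_eq_mul] at hm ⊢
  have hdiv := hcat.isDivisionPoint (y := g s) (z := g t) (m := g ((1 - b) * s + b * t))
    ⟨hb, by linarith⟩ ?_ ?_ x
  · rw [hg s hs t ht, sq_abs] at hdiv
    rw [Real.norm_eq_abs, sq_abs]
    linarith
  · rw [hg s hs _ hm, hg s hs t ht, show s - ((1 - b) * s + b * t) = b * (s - t) by ring, abs_mul,
      abs_of_nonneg hb]
  · rw [hg _ hm t ht, hg s hs t ht, show (1 - b) * s + b * t - t = (1 - b) * (s - t) by ring,
      abs_mul, abs_of_nonneg ha]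

namespace IsNearest

lemma sq_add_sq_le (hs : IsNearest g I s x) (hg : IsGeodOn g I) (hI : I.OrdConnected)
    (ht : t ∈ I) : dist x (g s) ^ 2 + (s - t) ^ 2 ≤ dist x (g t) ^ 2 := by
  have hconv := hg.strongConvexOn_sq_dist hcat hI x
  have hsmall : ∀ᶠ l in nhdsWithin (0 : ℝ) (Ioi 0),
      dist x (g s) ^ 2 + (1 - l) * (s - t) ^ 2 ≤ dist x (g t) ^ 2 := by
    filter_upwards [Ioo_mem_nhdsGT one_pos] with l hl
    have hl1 : 0 ≤ 1 - l := by linarith [hl.2]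
    have hmin := hs.2 _ (hconv.1 hs.1 ht hl1 hl.1.le (by ring))
    have hle := hconv.2 hs.1 ht hl1 hl.1.le (by ring)
    simp only [smul_eq_mul, Real.norm_eq_abs, sq_abs] at hle hmin
    have hsq := pow_le_pow_left₀ dist_nonneg hmin 2
    refine le_of_mul_le_mul_left ?_ hl.1
    linarith
  refine le_of_tendsto (Tendsto.mono_left ?_ nhdsWithin_le_nhds) hsmall
  exact Continuous.tendsto' (by fun_prop) _ _ (by ring)

lemma abs_sub_le (hs : IsNearest g I s x) (ht : IsNearest g I t y) (hg : IsGeodOn g I)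
    (hI : I.OrdConnected) : |s - t| ≤ dist x y := by
  have hx := hs.sq_add_sq_le hcat hg hI ht.1
  have hy := ht.sq_add_sq_le hcat hg hI hs.1
  have hquad := hcat.quadrilateral x (g s) (g t) y
  rw [hg s hs.1 t ht.1, sq_abs, dist_comm (g s) y, dist_comm (g t) y, dist_comm y x] at hquad
  refine abs_le_of_sq_le_sq ?_ dist_nonneg
  linarith [sub_sq_comm s t]

lemma eq (hs : IsNearest g I s x) (ht : IsNearest g I t x) (hg : IsGeodOn g I)
    (hI : I.OrdConnected) : s = t := by
  simpa [sub_eq_zero] using hs.abs_sub_le hcat ht hg hI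

lemma dist_lt_dist (hs : IsNearest g I s x) (hg : IsGeodOn g I) (hI : I.OrdConnected) {u v : ℝ}
    (hv : v ∈ I) (hsu : s ≤ u) (huv : u < v) : dist x (g u) < dist x (g v) := by
  refine lt_of_pow_lt_pow_left₀ 2 dist_nonneg ?_
  rcases hsu.eq_or_lt with rfl | hsu
  · have : 0 < (s - v) ^ 2 := sq_pos_of_neg (sub_neg.2 huv)
    linarith [hs.sq_add_sq_le hcat hg hI hv]
  · have hlt : dist x (g u) ^ 2 < max (dist x (g s) ^ 2) (dist x (g v) ^ 2) :=
      ((hg.strongConvexOn_sq_dist hcat hI x).strictConvexOn two_pos).lt_on_openSegment hs.1 hv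
        (hsu.trans huv).ne (by rw [openSegment_eq_Ioo (hsu.trans huv)]; exact ⟨hsu, huv⟩)
    rwa [max_eq_right (pow_le_pow_left₀ dist_nonneg (hs.2 v hv) 2)] at hlt

/-- All of `g` still projects to `α s` on `α`, so the Pythagorean inequalities for `α` and for `g`
force the projection of `α t` to `g` to have parameter `0`. -/
lemma isNearest_zero {α : ℝ → X} (hs : IsNearest α I s x) (hα : IsGeodOn α I)
    (hI : I.OrdConnected) (hg : IsGeodOn g (Icc 0 (dist (α s) x))) (hg0 : g 0 = α s)
    (hg1 : g (dist (α s) x) = x) (ht : t ∈ I) :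
    IsNearest g (Icc 0 (dist (α s) x)) 0 (α t) := by
  have hmem0 : (0 : ℝ) ∈ Icc 0 (dist (α s) x) := ⟨le_rfl, dist_nonneg⟩
  have hmem1 : dist (α s) x ∈ Icc 0 (dist (α s) x) := ⟨dist_nonneg, le_rfl⟩
  obtain ⟨u, hu⟩ := hg.exists_isNearest isClosed_Icc ⟨0, hmem0⟩ (α t)
  have hu0 : dist (g u) (α s) = u := by
    rw [← hg0, hg u hu.1 0 hmem0, sub_zero, abs_of_nonneg hu.1.1]
  have hu1 : dist x (g u) = dist (α s) x - u := by
    simpa only [hg1, abs_of_nonneg (sub_nonneg.2 hu.1.2)] using hg _ hmem1 u hu.1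
  have hnear : IsNearest α I s (g u) :=
    hs.of_between (by rw [hu0, hu1, dist_comm x]; linarith)
  have hge := hu.sq_add_sq_le hcat hg ordConnected_Icc hmem0
  have hle := hnear.sq_add_sq_le hcat hα hI ht
  rw [hu0, dist_comm (g u)] at hle
  rw [hg0, hα t ht s hs.1, sq_abs] at hge
  have : u = 0 := by nlinarith
  rwa [this] at hu

end IsNearest

/-- Otherwise some earlier point of `g` would be strictly closer than `g D` to both `a` and `b`. -/
lemma IsGeodOn.isNearest_right_or {D : ℝ} (hg : IsGeodOn g (Icc 0 D)) (hD : 0 ≤ D) {a b : X}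
    (hab : dist a (g D) + dist (g D) b ≤ dist a b) :
    IsNearest g (Icc 0 D) D a ∨ IsNearest g (Icc 0 D) D b := by
  have hmem : D ∈ Icc 0 D := ⟨hD, le_rfl⟩
  obtain ⟨u, hu⟩ := hg.exists_isNearest isClosed_Icc ⟨D, hmem⟩ a
  obtain ⟨v, hv⟩ := hg.exists_isNearest isClosed_Icc ⟨D, hmem⟩ b
  rcases hu.1.2.eq_or_lt with rfl | huD
  · exact Or.inl hu
  rcases hv.1.2.eq_or_lt with rfl | hvD
  · exact Or.inr hv
  have ha := hu.dist_lt_dist hcat hg ordConnected_Icc hmem (le_max_left u v) (max_lt huD hvD)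
  have hb := hv.dist_lt_dist hcat hg ordConnected_Icc hmem (le_max_right u v) (max_lt huD hvD)
  rw [dist_comm (g D)] at hab
  linarith [dist_triangle_right a b (g (max u v))]

end Geodesics

section Curtains

namespace Curtain

variable (h : Curtain X) {s : ℝ} {o x y : X} {S : Set X}

lemma t_mem : h.t ∈ h.I :=
  h.icc_subset ⟨by norm_num, by norm_num⟩

/-- The same curtain with its two halfspaces exchanged. -/
def reverse : Curtain X where
  γ s := h.γ (-s)
  I := Neg.neg ⁻¹' h.I
  t := -h.t
  ordConnected := ⟨fun _ ha _ hb _ hs =>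
    h.ordConnected.out hb ha ⟨neg_le_neg hs.2, neg_le_neg hs.1⟩⟩
  isClosed := h.isClosed.preimage continuous_neg
  icc_subset s hs := h.icc_subset ⟨by linarith [hs.2], by linarith [hs.1]⟩
  geodesic s hs s' hs' := by
    rw [h.geodesic _ hs _ hs', abs_sub_comm, neg_sub_neg]

lemma reverse_isProjParam : h.reverse.IsProjParam s x ↔ h.IsProjParam (-s) x := by
  refine and_congr_right fun _ => ⟨fun hs t ht => ?_, fun hs t ht => hs _ ht⟩
  simpa only [reverse, neg_neg] using hs (-t) (by simpa only [reverse, mem_preimage, neg_neg])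

lemma exists_reverse_isProjParam {p : ℝ → Prop} :
    (∃ s, h.reverse.IsProjParam s x ∧ p s) ↔ ∃ s, h.IsProjParam s x ∧ p (-s) :=
  (neg_surjective.exists (p := fun s => h.reverse.IsProjParam s x ∧ p s)).trans <|
    exists_congr fun s => and_congr_left' (by rw [reverse_isProjParam, neg_neg])

lemma reverse_carrier : h.reverse.carrier = h.carrier := by
  ext x
  refine h.exists_reverse_isProjParam.trans (exists_congr fun s => and_congr_right' ?_)
  simp only [reverse, mem_Icc]
  constructor <;> rintro ⟨h₁, h₂⟩ <;> constructor <;> linarith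

lemma reverse_minus : h.reverse.minus = h.plus := by
  ext x
  refine h.exists_reverse_isProjParam.trans (exists_congr fun s => and_congr_right' ?_)
  simp only [reverse]
  constructor <;> intro _ <;> linarith

lemma reverse_plus : h.reverse.plus = h.minus := by
  ext x
  refine h.exists_reverse_isProjParam.trans (exists_congr fun s => and_congr_right' ?_)
  simp only [reverse]
  constructor <;> intro _ <;> linarith

/-- The parameter of the nearest-point projection of `x` to the geodesic of the curtain. -/
noncomputable def proj (x : X) : ℝ :=
  (IsGeodOn.exists_isNearest h.geodesic h.isClosed ⟨h.t, h.t_mem⟩ x).choose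

lemma isNearest_proj (x : X) : IsNearest h.γ h.I (h.proj x) x :=
  (IsGeodOn.exists_isNearest h.geodesic h.isClosed ⟨h.t, h.t_mem⟩ x).choose_spec

section CAT0

variable [CompleteSpace X] (hcat : IsCAT0 X)
include hcat

lemma isProjParam_iff : h.IsProjParam s x ↔ h.proj x = s :=
  ⟨fun hs => (h.isNearest_proj x).eq hcat hs h.geodesic h.ordConnected,
    fun hs => hs ▸ h.isNearest_proj x⟩

lemma proj_apply (hs : s ∈ h.I) : h.proj (h.γ s) = s :=
  (h.isProjParam_iff hcat).1 (IsNearest.self hs)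

lemma abs_proj_sub_proj_le (x y : X) : |h.proj x - h.proj y| ≤ dist x y :=
  (h.isNearest_proj x).abs_sub_le hcat (h.isNearest_proj y) h.geodesic h.ordConnected

lemma continuous_proj : Continuous h.proj :=
  LipschitzWith.continuous (K := 1) <| .of_dist_le_mul fun x y => by
    rw [NNReal.coe_one, one_mul, Real.dist_eq]
    exact h.abs_proj_sub_proj_le hcat x y

lemma mem_carrier_iff : x ∈ h.carrier ↔ h.proj x ∈ Icc (h.t - 2⁻¹) (h.t + 2⁻¹) := by
  simp only [carrier, mem_ofPred_eq, h.isProjParam_iff hcat, exists_eq_left']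

lemma mem_minus_iff : x ∈ h.minus ↔ h.proj x < h.t - 2⁻¹ := by
  simp only [minus, mem_ofPred_eq, h.isProjParam_iff hcat, exists_eq_left']

lemma mem_plus_iff : x ∈ h.plus ↔ h.t + 2⁻¹ < h.proj x := by
  simp only [plus, mem_ofPred_eq, h.isProjParam_iff hcat, exists_eq_left']

lemma minus_subset_compl_plus : h.minus ⊆ h.plusᶜ := fun x hx => by
  rw [mem_compl_iff, h.mem_plus_iff hcat]
  rw [h.mem_minus_iff hcat] at hx
  linarith

lemma carrier_eq : h.carrier = h.minusᶜ ∩ h.plusᶜ := by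
  ext x
  simp only [h.mem_carrier_iff hcat, mem_inter_iff, mem_compl_iff, h.mem_minus_iff hcat,
    h.mem_plus_iff hcat, not_lt, mem_Icc]

lemma carrier_nonempty : h.carrier.Nonempty :=
  ⟨h.γ h.t, (h.mem_carrier_iff hcat).2 <| by
    rw [h.proj_apply hcat h.t_mem]; exact ⟨by norm_num, by norm_num⟩⟩

lemma exists_isPreconnected_fibre (x : X) : ∃ T : Set X, IsPreconnected T ∧ x ∈ T ∧
    h.γ (h.proj x) ∈ T ∧ ∀ w ∈ T, h.proj w = h.proj x := by
  obtain ⟨g, hg0, hg1, hg⟩ := hcat.exists_geodesic x (h.γ (h.proj x))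
  have hmem0 : (0 : ℝ) ∈ Icc 0 (dist x (h.γ (h.proj x))) := ⟨le_rfl, dist_nonneg⟩
  have hmem1 : dist x (h.γ (h.proj x)) ∈ Icc 0 (dist x (h.γ (h.proj x))) := ⟨dist_nonneg, le_rfl⟩
  refine ⟨g '' Icc 0 (dist x (h.γ (h.proj x))), hg.isPreconnected_image ordConnected_Icc,
    ⟨0, hmem0, hg0⟩, ⟨_, hmem1, hg1⟩, ?_⟩
  rintro _ ⟨r, hr, rfl⟩
  refine (h.isProjParam_iff hcat).1 ((h.isNearest_proj x).of_between ?_)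
  have hxr := hg 0 hmem0 r hr
  have hry := hg r hr _ hmem1
  rw [hg0, zero_sub, abs_neg, abs_of_nonneg hr.1] at hxr
  rw [hg1, abs_sub_comm, abs_of_nonneg (sub_nonneg.2 hr.2)] at hry
  linarith

lemma isPreconnected_preimage_proj {J : Set ℝ} (hJ : J.OrdConnected) :
    IsPreconnected (h.proj ⁻¹' J) := by
  rcases (h.proj ⁻¹' J).eq_empty_or_nonempty with hempty | ⟨x₀, hx₀⟩
  · exact hempty ▸ isPreconnected_empty
  refine isPreconnected_of_forall (h.γ (h.proj x₀)) fun y hy => ?_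
  obtain ⟨T, hT, hyT, hγT, hTproj⟩ := h.exists_isPreconnected_fibre hcat y
  have hγ : IsPreconnected (h.γ '' (h.I ∩ J)) :=
    (IsGeodOn.mono h.geodesic inter_subset_left).isPreconnected_image (h.ordConnected.inter hJ)
  refine ⟨h.γ '' (h.I ∩ J) ∪ T, ?_, Or.inl ⟨_, ⟨(h.isNearest_proj x₀).1, hx₀⟩, rfl⟩, Or.inr hyT,
    hγ.union _ ⟨_, ⟨(h.isNearest_proj y).1, hy⟩, rfl⟩ hγT hT⟩
  rintro w (⟨s, hs, rfl⟩ | hw)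
  · rw [mem_preimage, h.proj_apply hcat hs.1]
    exact hs.2
  · rwa [mem_preimage, hTproj w hw]

lemma isPreconnected_carrier : IsPreconnected h.carrier := by
  rw [show h.carrier = h.proj ⁻¹' Icc (h.t - 2⁻¹) (h.t + 2⁻¹) from ext fun _ =>
    h.mem_carrier_iff hcat]
  exact h.isPreconnected_preimage_proj hcat ordConnected_Icc

lemma isPreconnected_compl_minus : IsPreconnected h.minusᶜ := by
  rw [show h.minusᶜ = h.proj ⁻¹' Ici (h.t - 2⁻¹) from ext fun _ =>
    (h.mem_minus_iff hcat).not.trans not_lt]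
  exact h.isPreconnected_preimage_proj hcat ordConnected_Ici

lemma isPreconnected_compl_plus : IsPreconnected h.plusᶜ := by
  rw [← reverse_minus]
  exact h.reverse.isPreconnected_compl_minus hcat

variable {h}

lemma carrier_inter_nonempty (hS : IsPreconnected S) (hx : x ∈ S) (hxh : x ∉ h.plus) (hy : y ∈ S)
    (hyh : y ∉ h.minus) : (h.carrier ∩ S).Nonempty := by
  by_cases hxm : x ∈ h.minus
  · rw [h.mem_minus_iff hcat] at hxm hyh
    obtain ⟨w, hw, hproj⟩ := hS.intermediate_value hx hy (h.continuous_proj hcat).continuousOn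
      ⟨hxm.le, not_lt.1 hyh⟩
    exact ⟨w, (h.mem_carrier_iff hcat).2 (hproj ▸ ⟨le_rfl, by linarith⟩), hw⟩
  · exact ⟨x, h.carrier_eq hcat ▸ ⟨hxm, hxh⟩, hx⟩

lemma subset_minus (hS : IsPreconnected S) (hdisj : Disjoint h.carrier S) (hx : x ∈ S)
    (hxh : x ∈ h.minus) : S ⊆ h.minus := fun y hy => by
  by_contra hyh
  exact not_disjoint_iff_nonempty_inter.2
    (carrier_inter_nonempty hcat hS hx (h.minus_subset_compl_plus hcat hxh) hy hyh) hdisj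

lemma subset_plus (hS : IsPreconnected S) (hdisj : Disjoint h.carrier S) (hx : x ∈ S)
    (hxh : x ∈ h.plus) : S ⊆ h.plus := by
  rw [← reverse_minus] at hxh ⊢
  exact subset_minus hcat hS (by rwa [reverse_carrier]) hx hxh

lemma subset_minus_or_subset_plus (hS : IsPreconnected S) (hdisj : Disjoint h.carrier S)
    (hne : S.Nonempty) : S ⊆ h.minus ∨ S ⊆ h.plus := by
  obtain ⟨x, hx⟩ := hne
  by_cases hxm : x ∈ h.minus
  · exact Or.inl (subset_minus hcat hS hdisj hx hxm)
  · refine Or.inr (subset_plus hcat hS hdisj hx (by_contra fun hxp => ?_))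
    exact disjoint_right.1 hdisj hx (h.carrier_eq hcat ▸ ⟨hxm, hxp⟩)

lemma exists_notMem_minus_dist_add_one_le (ho : o ∈ h.minus) (hy : y ∈ h.plus) :
    ∃ w ∉ h.minus, dist o w + 1 ≤ dist o y := by
  obtain ⟨g, hg0, hg1, hg⟩ := hcat.exists_geodesic o y
  have hmem0 : (0 : ℝ) ∈ Icc 0 (dist o y) := ⟨le_rfl, dist_nonneg⟩
  have hmem1 : dist o y ∈ Icc 0 (dist o y) := ⟨dist_nonneg, le_rfl⟩
  rw [h.mem_minus_iff hcat] at ho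
  rw [h.mem_plus_iff hcat] at hy
  obtain ⟨_, ⟨s, hs, rfl⟩, hw⟩ := (hg.isPreconnected_image ordConnected_Icc).intermediate_value
    ⟨0, hmem0, hg0⟩ ⟨_, hmem1, hg1⟩ (h.continuous_proj hcat).continuousOn ⟨ho.le, by linarith⟩
  refine ⟨g s, by rw [h.mem_minus_iff hcat, hw]; exact lt_irrefl _, ?_⟩
  have hos := hg 0 hmem0 s hs
  have hsy := hg s hs _ hmem1
  have hproj := (le_abs_self _).trans (h.abs_proj_sub_proj_le hcat y (g s))
  rw [hg0, zero_sub, abs_neg, abs_of_nonneg hs.1] at hos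
  rw [hg1, abs_sub_comm, abs_of_nonneg (sub_nonneg.2 hs.2), dist_comm] at hsy
  linarith

end CAT0

/-- `h` precedes `k` when passing from the minus to the plus sides: the complement of `h⁺`, which
contains `h` itself, lies in `k⁻`. -/
def Precedes (h k : Curtain X) : Prop :=
  h.plusᶜ ⊆ k.minus

namespace Precedes

variable {h k l : Curtain X}

lemma compl_minus_subset (hk : h.Precedes k) : k.minusᶜ ⊆ h.plus :=
  compl_subset_comm.1 hk

lemma reverse (hk : h.Precedes k) : k.reverse.Precedes h.reverse := by
  rw [Precedes, reverse_plus, reverse_minus]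
  exact hk.compl_minus_subset

variable [CompleteSpace X] (hcat : IsCAT0 X)
include hcat

lemma minus_subset (hk : h.Precedes k) : h.minus ⊆ k.minus :=
  (h.minus_subset_compl_plus hcat).trans hk

lemma plus_subset (hk : h.Precedes k) : k.plus ⊆ h.plus := by
  simpa only [reverse_minus] using hk.reverse.minus_subset hcat

lemma trans (hk : h.Precedes k) (hl : k.Precedes l) : h.Precedes l :=
  Subset.trans hk (hl.minus_subset hcat)

lemma carrier_subset_minus (hk : h.Precedes k) : h.carrier ⊆ k.minus :=
  (h.carrier_eq hcat ▸ inter_subset_right : h.carrier ⊆ h.plusᶜ).trans hk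

lemma carrier_subset_plus (hk : h.Precedes k) : k.carrier ⊆ h.plus := by
  simpa only [reverse_carrier, reverse_minus] using hk.reverse.carrier_subset_minus hcat

lemma disjoint_carrier (hk : h.Precedes k) : Disjoint h.carrier k.carrier := by
  refine disjoint_left.2 fun x hxh hxk => ?_
  rw [k.carrier_eq hcat] at hxk
  exact hxk.1 (hk.carrier_subset_minus hcat hxh)

lemma irrefl : ¬ h.Precedes h := fun hh =>
  (h.carrier_nonempty hcat).ne_empty (disjoint_self.1 (hh.disjoint_carrier hcat))

end Precedes

lemma precedes_or_precedes [CompleteSpace X] (hcat : IsCAT0 X) {h k : Curtain X}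
    (hdisj : Disjoint h.carrier k.carrier) (hoh : o ∈ h.minus) (hok : o ∈ k.minus)
    (hxh : x ∈ h.plus) (hxk : x ∈ k.plus) : h.Precedes k ∨ k.Precedes h := by
  rcases subset_minus_or_subset_plus hcat (k.isPreconnected_carrier hcat) hdisj
    (k.carrier_nonempty hcat) with hk | hk
  · right
    refine compl_subset_comm.1 (subset_plus hcat (h.isPreconnected_compl_minus hcat)
      (disjoint_compl_right.mono_left hk) (fun hx => ?_) hxk)
    exact h.minus_subset_compl_plus hcat hx hxh
  · left
    exact subset_minus hcat (h.isPreconnected_compl_plus hcat) (disjoint_compl_right.mono_left hk)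
      (h.minus_subset_compl_plus hcat hoh) hok

end Curtain

namespace LSeparated

variable {L : ℕ} {h k l : Curtain X}

lemma symm (hhk : LSeparated L h k) : LSeparated L k h :=
  ⟨inter_comm _ _ ▸ hhk.1, fun c n hc hk hh => hhk.2 c n hc hh hk⟩

lemma congr {h' k' : Curtain X} (hhk : LSeparated L h k) (hh : h'.carrier = h.carrier)
    (hk : k'.carrier = k.carrier) : LSeparated L h' k' := by
  simpa only [LSeparated, ChainMeets, hh, hk] using hhk

lemma disjoint (hhk : LSeparated L h k) : Disjoint h.carrier k.carrier :=
  disjoint_iff_inter_eq_empty.2 hhk.1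

lemma of_precedes [CompleteSpace X] (hcat : IsCAT0 X) (hhk : LSeparated L h k)
    (hk : h.Precedes k) (hl : k.Precedes l) : LSeparated L h l := by
  refine ⟨((hk.trans hcat hl).disjoint_carrier hcat).inter_eq, fun c n hc hch hcl => ?_⟩
  refine hhk.2 c n hc hch fun i hi => ?_
  obtain ⟨x, hxc, hxh⟩ := hch i hi
  obtain ⟨y, hyc, hyl⟩ := hcl i hi
  rw [inter_comm]
  refine Curtain.carrier_inter_nonempty hcat ((c i).isPreconnected_carrier hcat) hxc
    (k.minus_subset_compl_plus hcat (hk.carrier_subset_minus hcat hxh)) hyc fun hy => ?_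
  exact k.minus_subset_compl_plus hcat hy (hl.carrier_subset_plus hcat hyl)

end LSeparated

end Curtains

section Chains

/-- `c 0, …, c (n - 1)` is an `L`-chain whose curtains are all oriented the same way: each one
precedes the later ones. -/
structure IsOrderedLChain (L n : ℕ) (c : ℕ → Curtain X) : Prop where
  precedes : ∀ ⦃i j⦄, i < j → j < n → (c i).Precedes (c j)
  lSeparated : ∀ ⦃i j⦄, i < j → j < n → LSeparated L (c i) (c j)

/-- `c 0, …, c (n - 1)` is an `L`-chain separating `o` from `x`, ordered from `o` to `x`. -/
structure IsLChainFromTo (L n : ℕ) (c : ℕ → Curtain X) (o x : X) : Prop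
    extends IsOrderedLChain L n c where
  mem_minus : ∀ ⦃i⦄, i < n → o ∈ (c i).minus
  mem_plus : ∀ ⦃i⦄, i < n → x ∈ (c i).plus

variable {L m n p q : ℕ} {c b : ℕ → Curtain X} {o x y : X}

lemma LSeparated.exists_disjoint {h k : Curtain X} (hhk : LSeparated L h k) (hc : IsChainOn c n)
    (hn : L < n) :
    ∃ i < n, Disjoint h.carrier (c i).carrier ∨ Disjoint k.carrier (c i).carrier := by
  by_contra! hmeet
  simp only [not_disjoint_iff_nonempty_inter, inter_comm _ (c _).carrier] at hmeet
  exact (hhk.2 c n hc (fun i hi => (hmeet i hi).1) fun i hi => (hmeet i hi).2).not_gt hn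

namespace IsOrderedLChain

lemma take (hc : IsOrderedLChain L n c) (hm : m ≤ n) : IsOrderedLChain L m c where
  precedes _ _ hij hj := hc.precedes hij (hj.trans_le hm)
  lSeparated _ _ hij hj := hc.lSeparated hij (hj.trans_le hm)

lemma drop (hc : IsOrderedLChain L (m + n) c) : IsOrderedLChain L n fun i => c (m + i) where
  precedes _ _ hij hj := hc.precedes (by omega) (by omega)
  lSeparated _ _ hij hj := hc.lSeparated (by omega) (by omega)

lemma reverse (hc : IsOrderedLChain L n c) :
    IsOrderedLChain L n fun i => (c (n - 1 - i)).reverse where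
  precedes _ _ hij hj := (hc.precedes (by omega) (by omega)).reverse
  lSeparated _ _ hij hj := (hc.lSeparated (by omega) (by omega)).symm.congr
    (Curtain.reverse_carrier _) (Curtain.reverse_carrier _)

variable [CompleteSpace X] (hcat : IsCAT0 X)
include hcat

lemma isLChainOn (hc : IsOrderedLChain L n c) : IsLChainOn L c n := by
  refine ⟨fun i hi => Or.inl ⟨?_, ?_⟩, fun i hi j hj hij => ?_⟩
  · exact (hc.precedes i.lt_succ_self (by omega)).carrier_subset_minus hcat
  · exact (hc.precedes (i + 1).lt_succ_self (by omega)).carrier_subset_plus hcat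
  · rcases hij.lt_or_gt with h | h
    exacts [hc.lSeparated h hj, (hc.lSeparated h hi).symm]

/-- The curtain `c p` is given up because its `L`-separation from the earlier curtains of `c` is
what makes them `L`-separated from the curtains of `b`. -/
lemma append (hc : IsOrderedLChain L (p + 1) c) (hb : IsOrderedLChain L q b)
    (hcb : (c p).Precedes (b 0)) :
    IsOrderedLChain L (p + q) fun i => if i < p then c i else b (i - p) := by
  have hp : ∀ j < q, (c p).Precedes (b j) := fun j hj => by
    rcases j.eq_zero_or_pos with rfl | hj0
    exacts [hcb, hcb.trans hcat (hb.precedes hj0 hj)]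
  constructor <;> intro i j hij hj <;> split_ifs with hi hjp hjp
  · exact hc.precedes hij (by omega)
  · exact (hc.precedes hi (by omega)).trans hcat (hp _ (by omega))
  · omega
  · exact hb.precedes (by omega) (by omega)
  · exact hc.lSeparated hij (by omega)
  · exact (hc.lSeparated hi (by omega)).of_precedes hcat (hc.precedes hi (by omega))
      (hp _ (by omega))
  · omega
  · exact hb.lSeparated (by omega) (by omega)

end IsOrderedLChain

namespace IsLChainFromTo

lemma take (hc : IsLChainFromTo L n c o x) (hm : m ≤ n) : IsLChainFromTo L m c o x where
  toIsOrderedLChain := hc.toIsOrderedLChain.take hm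
  mem_minus _ hi := hc.mem_minus (hi.trans_le hm)
  mem_plus _ hi := hc.mem_plus (hi.trans_le hm)

lemma drop (hc : IsLChainFromTo L (m + n) c o x) :
    IsLChainFromTo L n (fun i => c (m + i)) o x where
  toIsOrderedLChain := hc.toIsOrderedLChain.drop
  mem_minus _ hi := hc.mem_minus (by omega)
  mem_plus _ hi := hc.mem_plus (by omega)

lemma reverse (hc : IsLChainFromTo L n c o x) :
    IsLChainFromTo L n (fun i => (c (n - 1 - i)).reverse) x o where
  toIsOrderedLChain := hc.toIsOrderedLChain.reverse
  mem_minus _ hi := Curtain.reverse_minus (c _) ▸ hc.mem_plus (by omega)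
  mem_plus _ hi := Curtain.reverse_plus (c _) ▸ hc.mem_minus (by omega)

lemma separates (hc : IsLChainFromTo L n c o x) :
    ∀ i < n, (c i).Separates {o} {x} := fun _ hi =>
  Or.inl ⟨singleton_subset_iff.2 (hc.mem_minus hi), singleton_subset_iff.2 (hc.mem_plus hi)⟩

lemma drop_of_notMem_plus (hc : IsLChainFromTo L (m + 1 + n) c o x) (hy : y ∉ (c m).plus) :
    IsLChainFromTo L n (fun i => c (m + 1 + i)) y x where
  toIsOrderedLChain := hc.toIsOrderedLChain.drop
  mem_minus _ hi := hc.precedes (by omega) (by omega) hy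
  mem_plus _ hi := hc.mem_plus (by omega)

lemma take_of_notMem_minus (hc : IsLChainFromTo L n c o x) (hm : m < n) (hy : y ∉ (c m).minus) :
    IsLChainFromTo L m c o y where
  toIsOrderedLChain := hc.toIsOrderedLChain.take hm.le
  mem_minus _ hi := hc.mem_minus (hi.trans hm)
  mem_plus _ hi := (hc.precedes hi hm).compl_minus_subset hy

variable [CompleteSpace X] (hcat : IsCAT0 X)
include hcat

lemma take_of_mem_plus (hc : IsLChainFromTo L n c o x) (hm : m < n) (hy : y ∈ (c m).plus) :
    IsLChainFromTo L (m + 1) c o y where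
  toIsOrderedLChain := hc.toIsOrderedLChain.take hm
  mem_minus _ hi := hc.mem_minus (by omega)
  mem_plus i hi := by
    rcases (Nat.lt_succ_iff.1 hi).eq_or_lt with rfl | him
    exacts [hy, (hc.precedes him hm).plus_subset hcat hy]

lemma append (hc : IsLChainFromTo L (p + 1) c o x) (hb : IsLChainFromTo L q b o x)
    (hcb : (c p).Precedes (b 0)) :
    IsLChainFromTo L (p + q) (fun i => if i < p then c i else b (i - p)) o x where
  toIsOrderedLChain := hc.toIsOrderedLChain.append hcat hb.toIsOrderedLChain hcb
  mem_minus i hi := by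
    split_ifs with hip
    exacts [hc.mem_minus (by omega), hb.mem_minus (by omega)]
  mem_plus i hi := by
    split_ifs with hip
    exacts [hc.mem_plus (by omega), hb.mem_plus (by omega)]

lemma length_le_dist (hc : IsLChainFromTo L n c o x) : (n : ℝ) ≤ dist o x := by
  induction n generalizing x with
  | zero => exact_mod_cast dist_nonneg
  | succ n ih =>
    obtain ⟨w, hw, hdist⟩ := Curtain.exists_notMem_minus_dist_add_one_le hcat
      (hc.mem_minus n.lt_succ_self) (hc.mem_plus n.lt_succ_self)
    push_cast
    linarith [ih (hc.take_of_notMem_minus n.lt_succ_self hw)]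

end IsLChainFromTo

lemma exists_strictMono_enumeration {α : Type*} [Fintype α] (r : α → α → Prop)
    [IsStrictTotalOrder α r] :
    ∃ σ : Fin (Fintype.card α) ≃ α, ∀ ⦃i j⦄, i < j → r (σ i) (σ j) := by
  classical
  let := linearOrderOfSTO r
  exact ⟨(monoEquivOfFin α rfl).toEquiv, fun i j hij => (monoEquivOfFin α rfl).strictMono hij⟩

lemma exists_strictMono_reindexing {α : Type*} (r : α → α → Prop) [IsStrictOrder α r] {f : ℕ → α}
    (hf : ∀ i < n, ∀ j < n, i ≠ j → r (f i) (f j) ∨ r (f j) (f i)) :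
    ∃ σ : ℕ → ℕ, (∀ i < n, σ i < n) ∧ ∀ ⦃i j⦄, i < j → j < n → r (f (σ i)) (f (σ j)) := by
  let s : Fin n → Fin n → Prop := fun i j => r (f i) (f j)
  have : IsStrictTotalOrder (Fin n) s :=
    { irrefl := fun i => irrefl_of r (f i)
      trans := fun i j k => trans_of r
      trichotomous := fun i j hij hji => by
        by_contra hne
        rcases hf i i.2 j j.2 (Fin.val_ne_of_ne hne) with h | h
        exacts [hij h, hji h] }
  obtain ⟨σ, hσ⟩ := exists_strictMono_enumeration s
  have hcard := Fintype.card_fin n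
  refine ⟨fun i => if hi : i < n then σ ⟨i, hi.trans_eq hcard.symm⟩ else i, fun i hi => ?_,
    fun i j hij hj => ?_⟩
  · simp only [dif_pos hi, Fin.is_lt]
  · simp only [dif_pos hj, dif_pos (hij.trans hj)]
    exact hσ (Fin.mk_lt_mk.2 hij)

lemma Curtain.Separates.exists_mem {h : Curtain X} (hsep : h.Separates {o} {x}) :
    ∃ k : Curtain X, k.carrier = h.carrier ∧ o ∈ k.minus ∧ x ∈ k.plus := by
  simp only [Curtain.Separates, singleton_subset_iff] at hsep
  rcases hsep with hox | hox
  · exact ⟨h, rfl, hox⟩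
  · exact ⟨h.reverse, h.reverse_carrier, h.reverse_minus ▸ hox.1, h.reverse_plus ▸ hox.2⟩

section CAT0

variable [CompleteSpace X] (hcat : IsCAT0 X)
include hcat

lemma exists_isLChainFromTo
    (hc : ∀ i < n, ∀ j < n, i ≠ j → LSeparated L (c i) (c j))
    (hsep : ∀ i < n, (c i).Separates {o} {x}) :
    ∃ c', IsLChainFromTo L n c' o x := by
  have horient : ∀ i, ∃ k : Curtain X, i < n →
      k.carrier = (c i).carrier ∧ o ∈ k.minus ∧ x ∈ k.plus := fun i => by
    by_cases hi : i < n
    · exact (hsep i hi).exists_mem.imp fun _ hk _ => hk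
    · exact ⟨c i, fun h => absurd h hi⟩
  choose d hd using horient
  have hdsep : ∀ i < n, ∀ j < n, i ≠ j → LSeparated L (d i) (d j) := fun i hi j hj hij =>
    (hc i hi j hj hij).congr (hd i hi).1 (hd j hj).1
  have : IsStrictOrder (Curtain X) Curtain.Precedes :=
    { irrefl := fun _ => Curtain.Precedes.irrefl hcat
      trans := fun _ _ _ => Curtain.Precedes.trans hcat }
  obtain ⟨σ, hσn, hσ⟩ := exists_strictMono_reindexing (n := n) (f := d) Curtain.Precedes
    fun i hi j hj hij => Curtain.precedes_or_precedes hcat (hdsep i hi j hj hij).disjoint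
      (hd i hi).2.1 (hd j hj).2.1 (hd i hi).2.2 (hd j hj).2.2
  refine ⟨d ∘ σ, ⟨hσ, fun i j hij hj => hdsep _ (hσn i (hij.trans hj)) _ (hσn j hj) fun he => ?_⟩,
    fun i hi => (hd _ (hσn i hi)).2.1, fun i hi => (hd _ (hσn i hi)).2.2⟩
  have hprec := hσ hij hj
  rw [he] at hprec
  exact Curtain.Precedes.irrefl hcat hprec

lemma bddAbove_setOf_isLChainOn (L : ℕ) (x y : X) :
    BddAbove {n | ∃ c : ℕ → Curtain X, IsLChainOn L c n ∧ ∀ i < n, (c i).Separates {x} {y}} := by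
  refine ⟨⌊dist x y⌋₊, ?_⟩
  rintro n ⟨c, hc, hsep⟩
  obtain ⟨c', hc'⟩ := exists_isLChainFromTo hcat hc.2 hsep
  exact Nat.le_floor (hc'.length_le_dist hcat)

lemma IsLChainFromTo.length_le_dL (hc : IsLChainFromTo L n c o x) : (n : ℝ) ≤ dL L o x := by
  unfold dL
  split_ifs with hox
  · simpa [hox] using hc.length_le_dist hcat
  · have hle := le_csSup (bddAbove_setOf_isLChainOn hcat L o x)
      ⟨c, hc.isLChainOn hcat, hc.separates⟩
    have : (n : ℝ) ≤ _ := Nat.cast_le.2 hle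
    linarith

lemma exists_isLChainFromTo_of_one_lt_dL (h : 1 < dL L x y) :
    ∃ n c, IsLChainFromTo L n c x y ∧ dL L x y = 1 + n := by
  unfold dL at h ⊢
  split_ifs at h ⊢ with hxy
  · exact absurd h zero_le_one.not_gt
  have hne : {n | ∃ c : ℕ → Curtain X,
      IsLChainOn L c n ∧ ∀ i < n, (c i).Separates {x} {y}}.Nonempty := by
    refine nonempty_iff_ne_empty.2 fun hempty => ?_
    rw [hempty, csSup_empty] at h
    simp at h
  obtain ⟨c, hc, hsep⟩ := Nat.sSup_mem hne (bddAbove_setOf_isLChainOn hcat L x y)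
  obtain ⟨c', hc'⟩ := exists_isLChainFromTo hcat hc.2 hsep
  exact ⟨_, c', hc', rfl⟩

/-- `L`-separation of `c 0` and `c 1` makes one of them disjoint from one of `b 0, …, b L`. From
there on, `c` traversed backwards and `b` join to a chain from `x` to `y`. -/
lemma IsLChainFromTo.length_add_length_le_dL (hc : IsLChainFromTo L n c y x)
    (hb : IsLChainFromTo L m b x y) (hoc : ∀ i < n, o ∈ (c i).minus)
    (hob : ∀ j < m, o ∈ (b j).minus) (hn : 2 ≤ n) (hm : L + 1 ≤ m) :
    (n + m : ℝ) ≤ dL L x y + (L + 2) := by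
  obtain ⟨i, hi, j, hj, hdisj⟩ :
      ∃ i < 2, ∃ j < L + 1, Disjoint (c i).carrier (b j).carrier := by
    obtain ⟨j, hj, hdisj | hdisj⟩ := (hc.lSeparated zero_lt_one hn).exists_disjoint
      ((hb.take hm).isLChainOn hcat).1 L.lt_succ_self
    exacts [⟨0, two_pos, j, hj, hdisj⟩, ⟨1, one_lt_two, j, hj, hdisj⟩]
  obtain ⟨p, rfl⟩ : ∃ p, n = i + (p + 1) := ⟨n - i - 1, by omega⟩
  obtain ⟨q, rfl⟩ : ∃ q, m = j + q := ⟨m - j, by omega⟩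
  have hcb : (c i).reverse.Precedes (b j) := by
    refine (Curtain.precedes_or_precedes hcat (o := x) (x := y)
      (by rwa [Curtain.reverse_carrier]) ?_ (hb.mem_minus (by omega)) ?_
      (hb.mem_plus (by omega))).resolve_right fun hbc => ?_
    · exact (c i).reverse_minus ▸ hc.mem_plus (by omega)
    · exact (c i).reverse_plus ▸ hc.mem_minus (by omega)
    · have ho := hbc.minus_subset hcat (hob j (by omega))
      rw [Curtain.reverse_minus] at ho
      exact (c i).minus_subset_compl_plus hcat (hoc i (by omega)) ho
  have hlen := (hc.drop.reverse.append hcat hb.drop (by simpa using hcb)).length_le_dL hcat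
  have hij : ((i + (p + 1) + (j + q) : ℕ) : ℝ) ≤ ((p + q + (L + 2) : ℕ) : ℝ) :=
    Nat.cast_le.2 (by omega)
  push_cast at hlen hij ⊢
  linarith

lemma exists_common_isLChainFromTo {K : ℕ} (hx : (K + L + 4 : ℝ) ≤ dL L x o)
    (hy : (K + L + 4 : ℝ) ≤ dL L y o) (hxy : (K + L + 4 : ℝ) ≤ gpD (dL L) o x y) :
    ∃ c, IsLChainFromTo L (K + 1) c o x ∧ IsLChainFromTo L (K + 1) c o y := by
  have hextract : ∀ z : X, (K + L + 4 : ℝ) ≤ dL L z o → ∃ n c,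
      IsLChainFromTo L (K + 1 + n) c o z ∧ dL L z o = 1 + (K + 1 + n) ∧ L + 2 ≤ n := by
    intro z hz
    have hone : 1 < dL L z o := by
      linarith [(K.cast_nonneg : (0 : ℝ) ≤ K), (L.cast_nonneg : (0 : ℝ) ≤ L)]
    obtain ⟨N, c, hc, hN⟩ := exists_isLChainFromTo_of_one_lt_dL hcat hone
    have hle : K + L + 3 ≤ N := by
      have : (K + L + 3 : ℝ) ≤ N := by linarith
      exact_mod_cast this
    obtain ⟨n, rfl⟩ : ∃ n, N = K + 1 + n := ⟨N - (K + 1), by omega⟩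
    exact ⟨n, _, hc.reverse, by rw [hN]; push_cast; ring, by omega⟩
  obtain ⟨n, c, hc, hxn, hn⟩ := hextract x hx
  obtain ⟨m, b, hb, hym, hm⟩ := hextract y hy
  by_cases hcy : y ∈ (c K).plus
  · exact ⟨c, hc.take (by omega), hc.take_of_mem_plus hcat (by omega) hcy⟩
  by_cases hbx : x ∈ (b K).plus
  · exact ⟨b, hb.take_of_mem_plus hcat (by omega) hbx, hb.take (by omega)⟩
  have hlen := (hc.drop_of_notMem_plus hcy).length_add_length_le_dL hcat
    (hb.drop_of_notMem_plus hbx) (o := o) (fun i hi => hc.mem_minus (by omega))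
    (fun j hj => hb.mem_minus (by omega)) (by omega) (by omega)
  rw [gpD, hxn, hym] at hxy
  linarith [(L.cast_nonneg : (0 : ℝ) ≤ L)]

end CAT0

end Chains

section Bottleneck

variable {L k : ℕ} {g α β : ℝ → X} {D r s t t₀ t₂ : ℝ} {o x y : X} {c : ℕ → Curtain X}

/-- The `j`-th member of a chain of `L + 1` curtains dual to a geodesic `g` of length at least
`2 * L + 2`. The index is clamped at `L`, so that the dual curtain exists for every `j`. -/
def segmentCurtain (hg : IsGeodOn g (Icc 0 D)) (hD : 2 * L + 2 ≤ D) (j : ℕ) : Curtain X where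
  γ := g
  I := Icc 0 D
  t := 2 * (min j L : ℕ) + 1
  ordConnected := ordConnected_Icc
  isClosed := isClosed_Icc
  icc_subset := by
    have hle : ((min j L : ℕ) : ℝ) ≤ L := Nat.cast_le.2 (min_le_right j L)
    exact Icc_subset_Icc (by linarith [((min j L).cast_nonneg : (0 : ℝ) ≤ _)]) (by linarith)
  geodesic := hg

lemma segmentCurtain_t (hg : IsGeodOn g (Icc 0 D)) (hD : 2 * L + 2 ≤ D) {j : ℕ} (hj : j ≤ L) :
    (segmentCurtain hg hD j).t = 2 * j + 1 := by
  simp only [segmentCurtain, min_eq_left hj]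

lemma isChainOn_segmentCurtain (hg : IsGeodOn g (Icc 0 D)) (hD : 2 * L + 2 ≤ D) :
    IsChainOn (segmentCurtain hg hD) (L + 1) := by
  intro i hi
  have ht₀ := segmentCurtain_t hg hD (j := i) (by omega)
  have ht₁ := segmentCurtain_t hg hD (j := i + 1) (by omega)
  have ht₂ := segmentCurtain_t hg hD (j := i + 2) (by omega)
  push_cast at ht₁ ht₂
  refine Or.inl ⟨fun z ⟨s, hs, hst⟩ => ⟨s, hs, ?_⟩, fun z ⟨s, hs, hst⟩ => ⟨s, hs, ?_⟩⟩
  · rw [ht₀] at hst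
    linarith [hst.2]
  · rw [ht₂] at hst
    linarith [hst.1]

/-- The curtain `h` has points projecting to either end of the geodesic `g` on `[0, D]`. -/
def Curtain.Spans (h : Curtain X) (g : ℝ → X) (D : ℝ) : Prop :=
  (∃ a ∈ h.carrier, IsNearest g (Icc 0 D) 0 a) ∧ ∃ b ∈ h.carrier, IsNearest g (Icc 0 D) D b

lemma IsSegParamTo.isGeodOn (hα : IsSegParamTo o x α) : IsGeodOn α (Icc 0 (dist o x)) :=
  fun s hs t ht => hα.2.1 s t hs.1 hs.2 ht.1 ht.2

lemma IsSegParamTo.apply_dist (hα : IsSegParamTo o x α) : α (dist o x) = x :=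
  hα.2.2 _ le_rfl

lemma IsSegParamTo.dist_apply (hα : IsSegParamTo o x α) (hs : s ∈ Icc 0 (dist o x)) :
    dist o (α s) = s := by
  simpa only [hα.1, zero_sub, abs_neg, abs_of_nonneg hs.1] using
    hα.isGeodOn 0 ⟨le_rfl, dist_nonneg⟩ s hs

section CAT0

variable [CompleteSpace X] (hcat : IsCAT0 X)
include hcat

lemma Curtain.Spans.chainMeets {h : Curtain X} (hspan : h.Spans g D) (hg : IsGeodOn g (Icc 0 D))
    (hD : 2 * L + 2 ≤ D) : ChainMeets (segmentCurtain hg hD) (L + 1) h := by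
  obtain ⟨⟨a, hah, ha⟩, b, hbh, hb⟩ := hspan
  intro j hj
  have ht := segmentCurtain_t hg hD (Nat.lt_succ_iff.1 hj)
  have hjL : (j : ℝ) ≤ L := Nat.cast_le.2 (Nat.lt_succ_iff.1 hj)
  have hproj_a := ((segmentCurtain hg hD j).isProjParam_iff hcat).1 ha
  have hproj_b := ((segmentCurtain hg hD j).isProjParam_iff hcat).1 hb
  refine carrier_inter_nonempty hcat (h.isPreconnected_carrier hcat) hah ?_ hbh ?_
  · rw [mem_plus_iff _ hcat, hproj_a, ht]
    linarith [(j.cast_nonneg : (0 : ℝ) ≤ j)]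
  · rw [mem_minus_iff _ hcat, hproj_b, ht]
    linarith

lemma LSeparated.lt_of_spans {h k : Curtain X} (hhk : LSeparated L h k)
    (hg : IsGeodOn g (Icc 0 D)) (hh : h.Spans g D) (hk : k.Spans g D) : D < 2 * L + 2 := by
  by_contra! hD
  exact (hhk.2 _ _ (isChainOn_segmentCurtain hg hD) (hh.chainMeets hcat hg hD)
    (hk.chainMeets hcat hg hD)).not_gt L.lt_succ_self

/-- Let `g` be the segment from the projection `α s` of `β t` to `β t`. As `α` projects to `g 0`
and one of `β t₀` and `β t₂` projects to the other end of `g`, both `k` and one of `h` and `l`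
span `g`. -/
lemma LSeparated.exists_dist_lt {h k l : Curtain X} (hhk : LSeparated L h k)
    (hkl : LSeparated L k l) {I J : Set ℝ} (hα : IsGeodOn α I) (hI : I.OrdConnected)
    (hIc : IsClosed I) (hαh : (h.carrier ∩ α '' I).Nonempty) (hαk : (k.carrier ∩ α '' I).Nonempty)
    (hαl : (l.carrier ∩ α '' I).Nonempty) (hβ : IsGeodOn β J) (ht₀ : t₀ ∈ J) (ht : t ∈ J)
    (ht₂ : t₂ ∈ J) (ht₀t : t₀ ≤ t) (htt₂ : t ≤ t₂) (hβh : β t₀ ∈ h.carrier)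
    (hβk : β t ∈ k.carrier) (hβl : β t₂ ∈ l.carrier) :
    ∃ s ∈ I, dist (α s) (β t) < 2 * L + 2 := by
  obtain ⟨s, hs⟩ := hα.exists_isNearest hIc (hαk.right.of_image) (β t)
  refine ⟨s, hs.1, ?_⟩
  obtain ⟨g, hg0, hg1, hg⟩ := hcat.exists_geodesic (α s) (β t)
  have hspan : ∀ e : Curtain X, (e.carrier ∩ α '' I).Nonempty →
      ∀ b ∈ e.carrier, IsNearest g (Icc 0 (dist (α s) (β t))) (dist (α s) (β t)) b →
      e.Spans g (dist (α s) (β t)) := by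
    rintro e ⟨_, hre, r, hr, rfl⟩ b hbe hb
    exact ⟨⟨α r, hre, hs.isNearest_zero hcat hα hI hg hg0 hg1 hr⟩, b, hbe, hb⟩
  have hself := IsNearest.self (g := g) (right_mem_Icc.2 (dist_nonneg (x := α s) (y := β t)))
  rw [hg1] at hself
  have hk := hspan k hαk _ hβk hself
  have hbetween : dist (β t₀) (g (dist (α s) (β t))) + dist (g (dist (α s) (β t))) (β t₂) ≤
      dist (β t₀) (β t₂) := by
    rw [hg1, hβ _ ht₀ _ ht, hβ _ ht _ ht₂, hβ _ ht₀ _ ht₂, abs_of_nonpos (sub_nonpos.2 ht₀t),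
      abs_of_nonpos (sub_nonpos.2 htt₂), abs_of_nonpos (sub_nonpos.2 (ht₀t.trans htt₂))]
    linarith
  rcases hg.isNearest_right_or hcat dist_nonneg hbetween with hnear | hnear
  · exact hhk.lt_of_spans hcat hg (hspan h hαh _ hβh hnear) hk
  · exact hkl.lt_of_spans hcat hg hk (hspan l hαl _ hβl hnear)

lemma IsGeodOn.exists_mem_carrier {h : Curtain X} {a b : ℝ} (hg : IsGeodOn g (Icc a b))
    (hab : a ≤ b) (ha : g a ∉ h.plus) (hb : g b ∉ h.minus) : ∃ s ∈ Icc a b, g s ∈ h.carrier := by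
  obtain ⟨_, hsh, s, hs, rfl⟩ := Curtain.carrier_inter_nonempty hcat
    (hg.isPreconnected_image ordConnected_Icc) (mem_image_of_mem g ⟨le_rfl, hab⟩) ha
    (mem_image_of_mem g ⟨hab, le_rfl⟩) hb
  exact ⟨s, hs, hsh⟩

lemma IsSegParamTo.exists_mem_carrier {h : Curtain X} (hα : IsSegParamTo o x α)
    (ho : o ∈ h.minus) (hx : x ∈ h.plus) : ∃ s ∈ Icc 0 (dist o x), α s ∈ h.carrier := by
  refine hα.isGeodOn.exists_mem_carrier hcat dist_nonneg ?_ ?_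
  · exact hα.1.symm ▸ h.minus_subset_compl_plus hcat ho
  · exact fun hm => h.minus_subset_compl_plus hcat hm (hα.apply_dist.symm ▸ hx)

lemma IsLChainFromTo.exists_dist_lt (hcx : IsLChainFromTo L (k + 3) c o x)
    (hcy : IsLChainFromTo L (k + 3) c o y) (hα : IsSegParamTo o x α) (hβ : IsSegParamTo o y β) :
    ∃ s ∈ Icc 0 (dist o x), ∃ t ∈ Icc 0 (dist o y), (k + 1 : ℝ) ≤ t ∧
      dist (α s) (β t) < 2 * L + 2 := by
  have hcross : ∀ i < k + 3, ((c i).carrier ∩ α '' Icc 0 (dist o x)).Nonempty := fun i hi =>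
    let ⟨r, hr, hri⟩ := hα.exists_mem_carrier hcat (hcx.mem_minus hi) (hcx.mem_plus hi)
    ⟨α r, hri, mem_image_of_mem α hr⟩
  obtain ⟨t, ht, htc⟩ := hβ.exists_mem_carrier hcat (hcy.mem_minus (i := k + 1) (by omega))
    (hcy.mem_plus (by omega))
  have htc' := htc
  rw [(c (k + 1)).carrier_eq hcat] at htc'
  obtain ⟨t₀, ht₀, ht₀c⟩ := (hβ.isGeodOn.mono (Icc_subset_Icc_right ht.2)).exists_mem_carrier hcat
    (h := c k) ht.1 (hβ.1.symm ▸ (c k).minus_subset_compl_plus hcat (hcy.mem_minus (by omega)))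
    fun hm => (c k).minus_subset_compl_plus hcat hm
      ((hcy.precedes k.lt_succ_self (by omega)).carrier_subset_plus hcat htc)
  obtain ⟨t₂, ht₂, ht₂c⟩ := (hβ.isGeodOn.mono (Icc_subset_Icc_left ht.1)).exists_mem_carrier hcat
    (h := c (k + 2)) ht.2 ((c (k + 2)).minus_subset_compl_plus hcat
      ((hcy.precedes (k + 1).lt_succ_self (by omega)).carrier_subset_minus hcat htc))
    fun hm => (c (k + 2)).minus_subset_compl_plus hcat hm
      (hβ.apply_dist.symm ▸ hcy.mem_plus (by omega))
  obtain ⟨s, hs, hst⟩ := (hcx.lSeparated k.lt_succ_self (by omega)).exists_dist_lt hcat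
    (hcx.lSeparated (k + 1).lt_succ_self (by omega)) hα.isGeodOn ordConnected_Icc isClosed_Icc
    (hcross k (by omega)) (hcross (k + 1) (by omega)) (hcross (k + 2) (by omega)) hβ.isGeodOn
    ⟨ht₀.1, ht₀.2.trans ht.2⟩ ht ⟨ht.1.trans ht₂.1, ht₂.2⟩ ht₀.2 ht₂.1 ht₀c htc ht₂c
  have hlen := (hcy.take_of_notMem_minus (by omega) htc'.1).length_le_dist hcat
  rw [hβ.dist_apply ht] at hlen
  exact ⟨s, hs, t, ht, by exact_mod_cast hlen, hst⟩

lemma IsSegParamTo.dist_le (hα : IsSegParamTo o x α) (hβ : IsSegParamTo o y β)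
    (hs : s ∈ Icc 0 (dist o x)) (ht : t ∈ Icc 0 (dist o y)) (hrx : r ≤ dist o x)
    (hr : r ∈ Icc 0 t) (ht0 : 0 < t) : dist (α r) (β r) ≤ 2 * (r / t) * dist (α s) (β t) := by
  have hl : r / t ∈ Icc (0 : ℝ) 1 := ⟨div_nonneg hr.1 ht0.le, (div_le_one ht0).2 hr.2⟩
  have hlt : r / t * t = r := div_mul_cancel₀ r ht0.ne'
  set l := r / t
  have hls : l * s ∈ Icc 0 (dist o x) :=
    ⟨mul_nonneg hl.1 hs.1, (mul_le_of_le_one_left hs.1 hl.2).trans hs.2⟩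
  have hry : r ∈ Icc 0 (dist o y) := ⟨hr.1, hr.2.trans ht.2⟩
  have hproportional : dist (α (l * s)) (β r) ≤ l * dist (α s) (β t) := by
    refine hcat.dist_le_of_proportional (o := o) hl ?_ ?_ ?_ ?_
    · rw [hα.dist_apply hls, hα.dist_apply hs]
    · rw [hα.isGeodOn _ hls _ hs, hα.dist_apply hs, abs_of_nonpos (by nlinarith [hs.1, hl.2])]
      linarith
    · rw [hβ.dist_apply hry, hβ.dist_apply ht, hlt]
    · rw [hβ.isGeodOn _ hry _ ht, hβ.dist_apply ht, abs_of_nonpos (sub_nonpos.2 hr.2)]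
      linarith
  have hshift : dist (α r) (α (l * s)) ≤ l * dist (α s) (β t) := by
    have habs := abs_dist_sub_le (α s) (β t) o
    rw [dist_comm _ o, dist_comm _ o, hα.dist_apply hs, hβ.dist_apply ht] at habs
    rw [hα.isGeodOn _ ⟨hr.1, hrx⟩ _ hls, ← hlt, ← mul_sub, abs_mul, abs_of_nonneg hl.1,
      abs_sub_comm]
    gcongr
    exact hl.1
  linarith [dist_triangle (α r) (α (l * s)) (β r)]

lemma IsSegParamTo.eqOn (hα : IsSegParamTo o x α) (hβ : IsSegParamTo o x β) :
    EqOn α β (Ici 0) := by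
  intro r hr
  rcases le_or_gt (dist o x) r with hle | hlt
  · rw [hα.2.2 r hle, hβ.2.2 r hle]
  · have hmem : dist o x ∈ Icc 0 (dist o x) := ⟨dist_nonneg, le_rfl⟩
    have hdist := hα.dist_le hcat hβ hmem hmem hlt.le ⟨hr, hlt.le⟩ (hr.trans_lt hlt)
    rwa [hα.apply_dist, hβ.apply_dist, dist_self, mul_zero, dist_le_zero] at hdist

lemma IsLChainFromTo.dist_le (hcx : IsLChainFromTo L (k + 3) c o x)
    (hcy : IsLChainFromTo L (k + 3) c o y) (hα : IsSegParamTo o x α) (hβ : IsSegParamTo o y β)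
    (hr : r ∈ Icc (0 : ℝ) (k + 1)) : dist (α r) (β r) ≤ r * (4 * L + 4) / (k + 1) := by
  obtain ⟨s, hs, t, ht, hkt, hst⟩ := hcx.exists_dist_lt hcat hcy hα hβ
  have hk : (0 : ℝ) < k + 1 := k.cast_add_one_pos
  have hlen := hcx.length_le_dist hcat
  push_cast at hlen
  calc dist (α r) (β r) ≤ 2 * (r / t) * dist (α s) (β t) :=
        hα.dist_le hcat hβ hs ht (by linarith [hr.2]) ⟨hr.1, hr.2.trans hkt⟩ (hk.trans_le hkt)
    _ ≤ 2 * (r / (k + 1)) * (2 * L + 2) := by have := hr.1; gcongr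
    _ = r * (4 * L + 4) / (k + 1) := by ring

lemma IsCAT0.exists_isSegParamTo (o x : X) : ∃ α, IsSegParamTo o x α := by
  obtain ⟨g, hg0, hg1, hg⟩ := hcat.exists_geodesic o x
  refine ⟨fun t => g (min t (dist o x)), ?_, fun s t hs0 hs ht0 ht => ?_, fun t ht => ?_⟩
  · simpa only [min_eq_left dist_nonneg] using hg0
  · simpa only [min_eq_left hs, min_eq_left ht] using hg s ⟨hs0, hs⟩ t ⟨ht0, ht⟩
  · simpa only [min_eq_right ht] using hg1

end CAT0

end Bottleneck

section Limits

variable [CompleteSpace X] {o : X} {x : ℕ → X} {α : ℕ → ℝ → X} {L : ℕ}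

lemma exists_ray_of_uniformCauchySeqOn (hα : ∀ n, IsSegParamTo o (x n) (α n))
    (hx : Tendsto (fun n => dist o (x n)) atTop atTop)
    (hcauchy : ∀ R, UniformCauchySeqOn α atTop (Icc 0 R)) :
    ∃ γ, IsRayFrom o γ ∧ ∀ R, TendstoUniformlyOn α γ atTop (Icc 0 R) := by
  have : Nonempty X := ⟨o⟩
  let γ : ℝ → X := fun t => limUnder atTop fun n => α n t
  have hγ : ∀ t : ℝ, 0 ≤ t → Tendsto (fun n => α n t) atTop (nhds (γ t)) := fun t ht =>
    ((hcauchy t).cauchySeq (right_mem_Icc.2 ht)).tendsto_limUnder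
  refine ⟨γ, ⟨?_, fun s t hs ht => ?_⟩, fun R =>
    (hcauchy R).tendstoUniformlyOn_of_tendsto fun t ht => hγ t ht.1⟩
  · refine tendsto_nhds_unique (hγ 0 le_rfl) ?_
    simp only [(hα _).1, tendsto_const_nhds]
  · refine tendsto_nhds_unique ((hγ s hs).dist (hγ t ht)) (tendsto_const_nhds.congr' ?_)
    filter_upwards [hx.eventually_ge_atTop s, hx.eventually_ge_atTop t] with n hns hnt
    exact ((hα n).2.1 s t hs hns ht hnt).symm

variable (hcat : IsCAT0 X)
include hcat

lemma ConvAtInfinityD.exists_common_isLChainFromTo (hconv : ConvAtInfinityD (dL L) o x) (K : ℕ) :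
    ∃ N, ∀ n ≥ N, ∀ m ≥ N,
      ∃ c, IsLChainFromTo L (K + 1) c o (x n) ∧ IsLChainFromTo L (K + 1) c o (x m) := by
  obtain ⟨N, hN⟩ := eventually_atTop_prod_self'.1
    (hconv.eventually_ge_atTop (K + L + 4 : ℝ))
  have hself : ∀ z : X, gpD (dL L) o z z = dL L z o := fun z => by
    simp only [gpD, dL, if_true]
    ring
  exact ⟨N, fun n hn m hm => Stmt11.exists_common_isLChainFromTo hcat (hself (x n) ▸ hN n hn n hn)
    (hself (x m) ▸ hN m hm m hm) (hN n hn m hm)⟩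

lemma ConvAtInfinityD.tendsto_dist_atTop (hconv : ConvAtInfinityD (dL L) o x) :
    Tendsto (fun n => dist o (x n)) atTop atTop := by
  refine tendsto_atTop.2 fun R => ?_
  obtain ⟨K, hK⟩ := exists_nat_ge R
  obtain ⟨N, hN⟩ := hconv.exists_common_isLChainFromTo hcat K
  filter_upwards [eventually_ge_atTop N] with n hn
  obtain ⟨c, hc, -⟩ := hN n hn n hn
  have hlen := hc.length_le_dist hcat
  push_cast at hlen
  linarith

lemma ConvAtInfinityD.uniformCauchySeqOn (hconv : ConvAtInfinityD (dL L) o x)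
    (hα : ∀ n, IsSegParamTo o (x n) (α n)) (R : ℝ) : UniformCauchySeqOn α atTop (Icc 0 R) := by
  refine Metric.uniformCauchySeqOn_iff.2 fun ε hε => ?_
  obtain ⟨k, hk⟩ := exists_nat_gt (max R (R * (4 * L + 4) / ε))
  obtain ⟨hRk, hεk⟩ := max_lt_iff.1 hk
  obtain ⟨N, hN⟩ := hconv.exists_common_isLChainFromTo hcat (k + 2)
  refine ⟨N, fun n hn m hm r hr => ?_⟩
  obtain ⟨c, hcn, hcm⟩ := hN n hn m hm
  rw [div_lt_iff₀ hε] at hεk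
  calc dist (α n r) (α m r) ≤ r * (4 * L + 4) / (k + 1) :=
        hcn.dist_le hcat hcm (hα n) (hα m) ⟨hr.1, by linarith [hr.2]⟩
    _ ≤ R * (4 * L + 4) / (k + 1) := by have := hr.2; gcongr
    _ < ε := by rw [div_lt_iff₀ k.cast_add_one_pos]; linarith

end Limits

theorem conv_in_hyperbolic_model_implies_visual_conv_general {X : Type*} [MetricSpace X]
    [CompleteSpace X] (hcat : IsCAT0 X) {o : X} {L : ℕ} {x : ℕ → X}
    (hconv : ConvAtInfinityD (dL L) o x) :
    ∃ γ : ℝ → X, IsRayFrom o γ ∧ ∀ c : ℕ → ℝ → X, (∀ n, IsSegParamTo o (x n) (c n)) →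
      ∀ R, TendstoUniformlyOn c γ atTop (Icc 0 R) := by
  choose α hα using fun n => hcat.exists_isSegParamTo o (x n)
  obtain ⟨γ, hγ, hαγ⟩ := exists_ray_of_uniformCauchySeqOn hα (hconv.tendsto_dist_atTop hcat)
    (hconv.uniformCauchySeqOn hcat hα)
  refine ⟨γ, hγ, fun c hc R => (hαγ R).congr (.of_forall fun n => ?_)⟩
  exact ((hα n).eqOn hcat (hc n)).mono Icc_subset_Ici_self

/-- **Convergence in the hyperbolic model implies visual convergence**
(Proposition `prop inverse map` of the paper). -/
theorem conv_in_hyperbolic_model_implies_visual_conv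
    (X : Type) [MetricSpace X] [CompleteSpace X] (hcat : IsCAT0 X)
    (o : X) (L : ℕ) (x : ℕ → X)
    (hconv : ConvAtInfinityD (dL L) o x) :
    ∃ γ : ℝ → X, IsRayFrom o γ ∧ SeqConvergesToRay o x γ := by
  obtain ⟨γ, hγ, hlim⟩ := conv_in_hyperbolic_model_implies_visual_conv_general hcat hconv
  exact ⟨γ, hγ, fun c hc t ht => (hlim c hc t).tendsto_at (right_mem_Icc.2 ht)⟩

end Stmt11
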